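/- arXiv:1901.09295 — 2 statements merged into one kernel-verified Lean document; each statement's English description precedes it below -/
import Mathlib

section
/- Let 0 < δ < 1. Then the intersection of the surface Ŝ = r̂(D̂) with the z-axis consists of exactly two points: {p ∈ r̂(D̂) : p₁ = 0 and p₂ = 0} = {(0, 0, δ/√2), (0, 0, −δ/√2)}. -/
open Real Set

noncomputable def dot3 (a b : Fin 3 → ℝ) : ℝ := a 0 * b 0 + a 1 * b 1 + a 2 * b 2

noncomputable def cross3 (a b : Fin 3 → ℝ) : Fin 3 → ℝ :=
  ![a 1 * b 2 - a 2 * b 1, a 2 * b 0 - a 0 * b 2, a 0 * b 1 - a 1 * b 0]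

noncomputable def pdu {E : Type*} [NormedAddCommGroup E] [NormedSpace ℝ E]
    (f : ℝ × ℝ → E) (p : ℝ × ℝ) : E := fderiv ℝ f p (1, 0)

noncomputable def pdv {E : Type*} [NormedAddCommGroup E] [NormedSpace ℝ E]
    (f : ℝ × ℝ → E) (p : ℝ × ℝ) : E := fderiv ℝ f p (0, 1)

noncomputable def curl3 (F : (Fin 3 → ℝ) → (Fin 3 → ℝ)) (q : Fin 3 → ℝ) : Fin 3 → ℝ :=
  ![fderiv ℝ F q (Pi.single 1 1) 2 - fderiv ℝ F q (Pi.single 2 1) 1,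
    fderiv ℝ F q (Pi.single 2 1) 0 - fderiv ℝ F q (Pi.single 0 1) 2,
    fderiv ℝ F q (Pi.single 0 1) 1 - fderiv ℝ F q (Pi.single 1 1) 0]

noncomputable def lineInt (P Q : ℝ × ℝ → ℝ) (a b c d : ℝ) : ℝ :=
  (∫ u in a..b, P (u, c)) + (∫ v in c..d, Q (b, v))
    - (∫ u in a..b, P (u, d)) - (∫ v in c..d, Q (a, v))

noncomputable def mob (p : ℝ × ℝ) : Fin 3 → ℝ :=
  ![(1 + p.2 * Real.cos (p.1 / 2)) * Real.cos p.1,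
    (1 + p.2 * Real.cos (p.1 / 2)) * Real.sin p.1,
    p.2 * Real.sin (p.1 / 2)]

noncomputable def rhat (δ : ℝ) (p : ℝ × ℝ) : Fin 3 → ℝ :=
  (1 - p.2) • mob (p.1, δ) + p.2 • mob (2 * π - p.1, δ)

theorem rhat_eq (δ u t : ℝ) : rhat δ (u, t) =
    ![Real.cos u * (1 + δ * Real.cos (u / 2) * (1 - 2 * t)),
      Real.sin u * ((1 - 2 * t) + δ * Real.cos (u / 2)),
      δ * Real.sin (u / 2)] := by
  have e : (2 * π - u) / 2 = π - u / 2 := by ring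
  ext i
  fin_cases i
  · simp [rhat, mob, e, Real.cos_pi_sub, Real.cos_two_pi_sub]
    ring
  · simp [rhat, mob, e, Real.cos_pi_sub, Real.sin_two_pi_sub]
    ring
  · simp [rhat, mob, e, Real.sin_pi_sub]
    ring

theorem stmt16 (δ : ℝ) (hδ0 : 0 < δ) (hδ1 : δ < 1) :
    {p : Fin 3 → ℝ |
        p ∈ rhat δ '' ((Set.Icc (-π) π) ×ˢ (Set.Icc (0 : ℝ) 1)) ∧ p 0 = 0 ∧ p 1 = 0}
      = {![0, 0, δ / Real.sqrt 2], ![0, 0, -(δ / Real.sqrt 2)]} := by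
  have hd : δ / Real.sqrt 2 = δ * (Real.sqrt 2 / 2) := by
    have h2 : Real.sqrt 2 * Real.sqrt 2 = 2 := Real.mul_self_sqrt (by norm_num)
    have h0 : Real.sqrt 2 ≠ 0 := by positivity
    field_simp
    nlinarith
  have hpi := Real.pi_pos
  have h2 : Real.sqrt 2 * Real.sqrt 2 = 2 := Real.mul_self_sqrt (by norm_num)
  have h0 : 0 < Real.sqrt 2 := by positivity
  have h3 : Real.sqrt 2 < 2 := by nlinarith
  rw [hd]
  ext p
  constructor
  · rintro ⟨⟨⟨u, t⟩, ⟨-, ht⟩, rfl⟩, hx, hy⟩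
    obtain ⟨ht0, ht1⟩ := ht
    simp only at ht0 ht1
    rw [rhat_eq] at hx hy ⊢
    simp only [Matrix.cons_val_zero, Matrix.cons_val_one] at hx hy
    have hb : 0 < 1 + δ * Real.cos (u / 2) * (1 - 2 * t) := by
      have ha : |δ * Real.cos (u / 2) * (1 - 2 * t)| < 1 := by
        rw [abs_mul, abs_mul, abs_of_pos hδ0]
        have h1 := Real.abs_cos_le_one (u / 2)
        have h2 : |1 - 2 * t| ≤ 1 := by rw [abs_le]; constructor <;> linarith
        calc δ * |Real.cos (u / 2)| * |1 - 2 * t| ≤ δ * 1 * 1 := by gcongr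
          _ < 1 := by linarith
      linarith [(abs_lt.mp ha).1]
    have hc : Real.cos u = 0 := by
      rcases mul_eq_zero.mp hx with h | h
      · exact h
      · exact absurd h hb.ne'
    have hs : Real.sin (u / 2) ^ 2 = 1 / 2 := by
      have h := Real.cos_two_mul (u / 2)
      rw [show 2 * (u / 2) = u by ring, hc] at h
      nlinarith [Real.sin_sq_add_cos_sq (u / 2)]
    have hf : (Real.sin (u / 2) - Real.sqrt 2 / 2) * (Real.sin (u / 2) + Real.sqrt 2 / 2) = 0 := by
      nlinarith
    rw [hx, hy]
    rcases mul_eq_zero.mp hf with h | h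
    · left
      rw [show Real.sin (u / 2) = Real.sqrt 2 / 2 by linarith]
    · right
      rw [Set.mem_singleton_iff, show Real.sin (u / 2) = -(Real.sqrt 2 / 2) by linarith, mul_neg]
  · have q : π / 2 / 2 = π / 4 := by ring
    have q' : -(π / 2) / 2 = -(π / 4) := by ring
    have hd1 : δ * (Real.sqrt 2 / 2) ≤ 1 := by nlinarith
    have hd0 : 0 ≤ δ * (Real.sqrt 2 / 2) := by positivity
    have hm : (1 + δ * (Real.sqrt 2 / 2)) / 2 ∈ Set.Icc (0 : ℝ) 1 := by
      constructor <;> linarith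
    rintro (rfl | rfl)
    · refine ⟨⟨(π / 2, (1 + δ * (Real.sqrt 2 / 2)) / 2),
        ⟨⟨by simp only; linarith, by simp only; linarith⟩, hm⟩, ?_⟩, by simp, by simp⟩
      rw [rhat_eq, q, Real.cos_pi_div_two, Real.sin_pi_div_two, Real.cos_pi_div_four,
        Real.sin_pi_div_four]
      congr 1
      · ring
      · congr 1
        ring
    · refine ⟨⟨(-(π / 2), (1 + δ * (Real.sqrt 2 / 2)) / 2),
        ⟨⟨by simp only; linarith, by simp only; linarith⟩, hm⟩, ?_⟩, by simp, by simp⟩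
      rw [rhat_eq, q', Real.cos_neg, Real.sin_neg, Real.cos_neg, Real.sin_neg,
        Real.cos_pi_div_two, Real.sin_pi_div_two, Real.cos_pi_div_four,
        Real.sin_pi_div_four, mul_neg]
      congr 1
      · ring
      · congr 1
        ring
end

section
/- Let 0 < δ < 1, let F(x,y,z) = (−y/(x²+y²), x/(x²+y²), 0), and set G = F ∘ r̂ (which is well defined on a neighborhood of ∂D̂, since r̂(∂D̂) does not meet the z-axis). Then ∮_{∂D̂} (G · r̂_u) du + (G · r̂_t) dt = 4π. -/
open Real Set

lemma mob_diff : Differentiable ℝ mob := by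
  intro p
  rw [differentiableAt_pi]
  intro i
  fin_cases i <;> simp [mob] <;> fun_prop

lemma rhat_diff (δ : ℝ) : Differentiable ℝ (rhat δ) := by
  have h := mob_diff
  unfold rhat
  fun_prop

lemma pdu_eq (δ u t : ℝ) (v : Fin 3 → ℝ)
    (h : HasDerivAt (fun s => rhat δ (s, t)) v u) : pdu (rhat δ) (u, t) = v := by
  have h1 : HasDerivAt (fun s : ℝ => (s, t)) ((1 : ℝ), (0 : ℝ)) u :=
    (hasDerivAt_id u).prodMk (hasDerivAt_const u t)
  have h2 : HasFDerivAt (rhat δ) (fderiv ℝ (rhat δ) (u, t)) ((fun s : ℝ => (s, t)) u) :=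
    (rhat_diff δ (u, t)).hasFDerivAt
  have h3 := h2.comp_hasDerivAt u h1
  exact h3.unique h

lemma pdv_eq (δ u t : ℝ) (v : Fin 3 → ℝ)
    (h : HasDerivAt (fun s => rhat δ (u, s)) v t) : pdv (rhat δ) (u, t) = v := by
  have h1 : HasDerivAt (fun s : ℝ => (u, s)) ((0 : ℝ), (1 : ℝ)) t :=
    (hasDerivAt_const t u).prodMk (hasDerivAt_id t)
  exact (((rhat_diff δ (u, t)).hasFDerivAt).comp_hasDerivAt t h1).unique h

lemma pdv_zero (δ u t : ℝ) (h : mob (2 * π - u, δ) = mob (u, δ)) :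
    pdv (rhat δ) (u, t) = 0 := by
  apply pdv_eq
  have : (fun s => rhat δ (u, s)) = fun _ => mob (u, δ) := by
    funext s
    simp only [rhat, h]
    rw [← add_smul]; simp
  rw [this]
  exact hasDerivAt_const _ _

lemma mob_deriv (δ u : ℝ) : HasDerivAt (fun s => mob (s, δ))
    ![-(δ * sin (u / 2) / 2) * cos u - (1 + δ * cos (u / 2)) * sin u,
      -(δ * sin (u / 2) / 2) * sin u + (1 + δ * cos (u / 2)) * cos u,
      δ * cos (u / 2) / 2] u := by
  have hd : HasDerivAt (fun s : ℝ => s / 2) (1 / 2) u := (hasDerivAt_id u).div_const 2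
  have hw : HasDerivAt (fun s : ℝ => 1 + δ * cos (s / 2)) (-(δ * sin (u / 2) / 2)) u := by
    refine ((hd.cos.const_mul δ).const_add 1).congr_deriv ?_
    ring
  rw [hasDerivAt_pi]
  intro i
  fin_cases i
  · refine (hw.mul (hasDerivAt_cos u)).congr_deriv ?_
    simp; ring
  · exact hw.mul (hasDerivAt_sin u)
  · refine (hd.sin.const_mul δ).congr_deriv ?_
    simp; ring

lemma dot_mob (δ u : ℝ) (h : 1 + δ * cos (u / 2) ≠ 0) (q v : Fin 3 → ℝ)
    (hq : q = mob (u, δ))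
    (hv : v = ![-(δ * sin (u / 2) / 2) * cos u - (1 + δ * cos (u / 2)) * sin u,
      -(δ * sin (u / 2) / 2) * sin u + (1 + δ * cos (u / 2)) * cos u,
      δ * cos (u / 2) / 2]) :
    dot3 ![-q 1 / (q 0 ^ 2 + q 1 ^ 2), q 0 / (q 0 ^ 2 + q 1 ^ 2), 0] v = 1 := by
  have e : q 0 ^ 2 + q 1 ^ 2 = (1 + δ * cos (u / 2)) ^ 2 := by
    subst hq
    simp only [mob, Matrix.cons_val_zero, Matrix.cons_val_one]
    linear_combination (1 + δ * cos (u / 2)) ^ 2 * sin_sq_add_cos_sq u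
  rw [e]
  subst hq hv
  simp only [mob, dot3, Matrix.cons_val_zero, Matrix.cons_val_one, Matrix.cons_val]
  field_simp
  linear_combination 2 * (1 + δ * cos (u / 2)) * sin_sq_add_cos_sq u

lemma w_ne (δ : ℝ) (hδ0 : 0 < δ) (hδ1 : δ < 1) (x : ℝ) : 1 + δ * cos x ≠ 0 := by
  have := neg_one_le_cos x
  nlinarith

theorem stmt17 (δ : ℝ) (hδ0 : 0 < δ) (hδ1 : δ < 1)
    (F : (Fin 3 → ℝ) → (Fin 3 → ℝ))
    (hF : F = fun q => ![-q 1 / (q 0 ^ 2 + q 1 ^ 2), q 0 / (q 0 ^ 2 + q 1 ^ 2), 0])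
    (G : ℝ × ℝ → Fin 3 → ℝ) (hG : G = F ∘ rhat δ) :
    lineInt (fun p => dot3 (G p) (pdu (rhat δ) p)) (fun p => dot3 (G p) (pdv (rhat δ) p))
        (-π) π 0 1 = 4 * π := by
  have h0 : ∀ u, dot3 (G (u, 0)) (pdu (rhat δ) (u, 0)) = 1 := by
    intro u
    have e : ∀ s, rhat δ (s, 0) = mob (s, δ) := fun s => by simp [rhat]
    rw [hG, hF]
    refine dot_mob δ u (w_ne δ hδ0 hδ1 _) _ _ (e u) (pdu_eq _ _ _ _ ?_)
    simp only [e]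
    exact mob_deriv δ u
  have h1 : ∀ u, dot3 (G (u, 1)) (pdu (rhat δ) (u, 1)) = -1 := by
    intro u
    have e : ∀ s, rhat δ (s, 1) = mob (2 * π - s, δ) := fun s => by simp [rhat]
    have k := dot_mob δ (2 * π - u) (w_ne δ hδ0 hδ1 _) _ _ (e u) rfl
    have hd := (mob_deriv δ (2 * π - u)).scomp u ((hasDerivAt_id u).const_sub (2 * π))
    have := pdu_eq δ u 1 _ (by simp only [e]; exact hd)
    rw [this, hG, hF]
    simp only [Function.comp, dot3, Pi.smul_apply, smul_eq_mul] at k ⊢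
    linear_combination -k
  have c1 : cos (3 * π / 2) = 0 := by
    rw [show 3 * π / 2 = π / 2 + π by ring, cos_add_pi, cos_pi_div_two]; simp
  have s1 : sin (3 * π / 2) = -1 := by
    rw [show 3 * π / 2 = π / 2 + π by ring, sin_add_pi, sin_pi_div_two]
  have c2 : cos (3 * π) = -1 := by
    rw [show 3 * π = π + 2 * π by ring, cos_add_two_pi, cos_pi]
  have s2 : sin (3 * π) = 0 := by
    rw [show 3 * π = π + 2 * π by ring, sin_add_two_pi, sin_pi]
  have z1 : ∀ t, pdv (rhat δ) (π, t) = 0 := fun t => pdv_zero δ π t (by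
    rw [show 2 * π - π = π by ring])
  have z2 : ∀ t, pdv (rhat δ) (-π, t) = 0 := fun t => pdv_zero δ (-π) t (by
    rw [show 2 * π - -π = 3 * π by ring]
    simp [mob, c1, s1, c2, s2, neg_div])
  simp only [lineInt, h0, h1, z1, z2]
  simp [dot3]
  ring
end
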